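/- arXiv:math/0611890 — 2 statements merged into one kernel-verified Lean document; each statement's English description precedes it below -/
import Mathlib

section
/- The system B = {ψ_m}_{m=1}^∞ is democratic in L_p([0,1]) for every 1 < p < ∞; more precisely, for each such p there are constants c_p, C_p > 0 so that for every finite set A ⊂ ℕ, c_p |A|^{1/2} ≤ ‖Σ_{m∈A} ψ_m‖_{L_p} ≤ C_p |A|^{1/2}. -/
open MeasureTheory Filter

noncomputable section

/-- Rademacher functions `r_k(t) = sign (sin (2^k π t))`, for `k ≥ 1`. -/
def rademacher (k : ℕ) (t : ℝ) : ℝ := Real.sign (Real.sin ((2:ℝ) ^ k * Real.pi * t))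

/-- The Walsh system: for `n = ∑ ε_j 2^(j-1)`, `W_n = ∏ r_j^(ε_j)`. -/
def walsh (n : ℕ) (t : ℝ) : ℝ :=
  ∏ j ∈ Finset.range n, if n.testBit j then rademacher (j + 1) t else 1

/-- The Olevskiĭ matrix entries `a_{ij}^{(k)}`, with `1 ≤ i, j ≤ 2^k` (1-based indices). -/
def olevskii (k i j : ℕ) : ℝ :=
  if j = 1 then (2:ℝ) ^ (-(k:ℝ) / 2)
  else
    let s := Nat.log 2 (j - 1)
    let ν := j - 2 ^ s
    if (ν - 1) * 2 ^ (k - s) < i ∧ i ≤ (2 * ν - 1) * 2 ^ (k - s - 1) then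
      (2:ℝ) ^ (((s:ℝ) - k) / 2)
    else if (2 * ν - 1) * 2 ^ (k - s - 1) < i ∧ i ≤ ν * 2 ^ (k - s) then
      -((2:ℝ) ^ (((s:ℝ) - k) / 2))
    else 0

/-- `N_k = 2^(10^k)`. -/
def Nn (k : ℕ) : ℕ := 2 ^ 10 ^ k

/-- `F_0 = 0`, `F_k = F_(k-1) + N_k - 1`. -/
def Fn : ℕ → ℕ
  | 0 => 0
  | k + 1 => Fn k + Nn (k + 1) - 1

/-- `φ_k`, the `k`-th (1-based) Walsh function that is not a Rademacher function,
in the Walsh order. -/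
def phi (k : ℕ) : ℝ → ℝ := walsh (Nat.nth (fun n => ¬ ∃ m : ℕ, n = 2 ^ m) (k - 1))

/-- `ψ_i^{(k)} = φ_k/√N_k + ∑_{j=2}^{N_k} a_{ij}^{(10^k)} r_{F_{k-1}+j-1}`. -/
def psiBlock (k i : ℕ) : ℝ → ℝ := fun t =>
  phi k t / Real.sqrt (Nn k) +
    ∑ j ∈ Finset.Icc 2 (Nn k), olevskii (10 ^ k) i j * rademacher (Fn (k - 1) + j - 1) t

/-- Cumulative block lengths: `cum k = N_1 + ⋯ + N_k`. -/
def cum : ℕ → ℕ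
  | 0 => 0
  | k + 1 => cum k + Nn (k + 1)

lemma le_cum (k : ℕ) : k ≤ cum k := by
  induction k with
  | zero => simp [cum]
  | succ k ih =>
      have h : 1 ≤ Nn (k + 1) := Nat.one_le_two_pow
      simp only [cum]; omega

/-- `psi m` is `ψ_{m+1}`, the `(m+1)`-th element of the system
`B = (ψ_1^{(1)}, …, ψ_{N_1}^{(1)}, ψ_1^{(2)}, …)` (0-based global indexing). -/
def psi (m : ℕ) : ℝ → ℝ :=
  let k := Nat.find (show ∃ k, m + 1 ≤ cum k from ⟨m + 1, le_cum (m + 1)⟩)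
  psiBlock k (m + 1 - cum (k - 1))

/-- `⟨f, g⟩ = ∫_0^1 f g`. -/
def inner01 (f g : ℝ → ℝ) : ℝ := ∫ t in Set.Icc (0:ℝ) 1, f t * g t

/-- The `L_p([0,1])` norm of a function. -/
def LpNorm (p : ℝ) (f : ℝ → ℝ) : ℝ :=
  (∫ t in Set.Icc (0:ℝ) 1, |f t| ^ p) ^ (1 / p)

/-- `ρ` is a greedy ordering for the coefficient sequence `c`. -/
def IsGreedyOrdering (c : ℕ → ℝ) (ρ : ℕ → ℕ) : Prop :=
  Function.Injective ρ ∧ {j | c j ≠ 0} ⊆ Set.range ρ ∧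
    ∀ j k : ℕ, j < k → |c (ρ k)| < |c (ρ j)| ∨ (|c (ρ k)| = |c (ρ j)| ∧ ρ j < ρ k)

end

/-!
Collecting the Walsh coefficients of `∑ m ∈ A, psi m` splits the sum as `Y + X`, where `Y` is
carried by the functions `phi k` and `X` by the Rademacher functions. Since the Olevskiĭ matrices
are orthogonal, the coefficients have square sum `|A|`. Block `k` contributes at most
`min (√N_k) (|A| / √N_k)` to `Y`, and these bounds sum to `O(√|A|)` because the `N_k` grow
geometrically; `X` is sub-Gaussian with parameter `|A|` because the Rademacher functions are
independent. Hence `exp (|Y + X| / √|A|)` has bounded integral. This bounds all `L_p` norms from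
above, and together with `‖Y + X‖₂ = √|A|` also from below, by interpolating the `L_2` norm between
`L_p` and a higher moment.
-/

section Moments

open ProbabilityTheory

variable {Ω : Type*} {mΩ : MeasurableSpace Ω} {μ : Measure Ω} {f : Ω → ℝ}

lemma rpow_abs_le_mul_exp_abs_div {q σ : ℝ} (hq : 0 ≤ q) (hσ : 0 < σ) (x : ℝ) :
    |x| ^ q ≤ (q * σ) ^ q * Real.exp (|x| / σ) := by
  simpa [abs_of_pos hσ, mul_comm, div_eq_mul_inv] using
    rpow_abs_le_mul_exp_abs x hq (inv_ne_zero hσ.ne')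

lemma integrable_abs_rpow_of_exp_abs_div {q σ : ℝ} (hq : 0 ≤ q) (hσ : 0 < σ)
    (hf : AEMeasurable f μ) (hexp : Integrable (fun ω => Real.exp (|f ω| / σ)) μ) :
    Integrable (fun ω => |f ω| ^ q) μ := by
  refine (hexp.const_mul ((q * σ) ^ q)).mono' (hf.abs.pow_const q).aestronglyMeasurable ?_
  filter_upwards with ω
  rw [Real.norm_of_nonneg (by positivity)]
  exact rpow_abs_le_mul_exp_abs_div hq hσ (f ω)

lemma integral_abs_rpow_le_of_exp_abs_div {q σ M : ℝ} (hq : 0 ≤ q) (hσ : 0 < σ)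
    (hexp : Integrable (fun ω => Real.exp (|f ω| / σ)) μ)
    (hM : ∫ ω, Real.exp (|f ω| / σ) ∂μ ≤ M) :
    ∫ ω, |f ω| ^ q ∂μ ≤ (q * σ) ^ q * M :=
  calc ∫ ω, |f ω| ^ q ∂μ
      ≤ ∫ ω, (q * σ) ^ q * Real.exp (|f ω| / σ) ∂μ :=
        integral_mono_of_nonneg (ae_of_all μ fun ω => by positivity) (hexp.const_mul _)
          (ae_of_all μ fun ω => rpow_abs_le_mul_exp_abs_div hq hσ (f ω))
    _ ≤ (q * σ) ^ q * M := by
        rw [integral_const_mul]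
        gcongr

lemma integral_abs_rpow_add_le {a b θ η : ℝ} (ha : 0 ≤ a) (hb : 0 ≤ b) (hθ : 0 < θ) (hη : 0 < η)
    (hθη : θ + η = 1) (hf : AEMeasurable f μ) (hfa : Integrable (fun ω => |f ω| ^ a) μ)
    (hfb : Integrable (fun ω => |f ω| ^ b) μ) :
    ∫ ω, |f ω| ^ (θ * a + η * b) ∂μ ≤
      (∫ ω, |f ω| ^ a ∂μ) ^ θ * (∫ ω, |f ω| ^ b ∂μ) ^ η := by
  have rpow_rpow_inv (c : ℝ) {ζ : ℝ} (hζ : 0 < ζ) (ω : Ω) :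
      (|f ω| ^ (ζ * c)) ^ ζ⁻¹ = |f ω| ^ c := by
    rw [← Real.rpow_mul (abs_nonneg _)]
    congr 1
    field_simp
  have memLp {c ζ : ℝ} (hζ : 0 < ζ) (hc : Integrable (fun ω => |f ω| ^ c) μ) :
      MemLp (fun ω => |f ω| ^ (ζ * c)) (ENNReal.ofReal ζ⁻¹) μ := by
    rw [← integrable_norm_rpow_iff (hf.abs.pow_const _).aestronglyMeasurable
      (by simpa using hζ) ENNReal.ofReal_ne_top, ENNReal.toReal_ofReal (by positivity)]
    simpa only [Real.norm_of_nonneg (Real.rpow_nonneg (abs_nonneg _) _), rpow_rpow_inv c hζ]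
      using hc
  have conj : θ⁻¹.HolderConjugate η⁻¹ := Real.HolderConjugate.inv_inv hθ hη hθη
  have holder := integral_mul_le_Lp_mul_Lq_of_nonneg conj
    (ae_of_all μ fun ω => Real.rpow_nonneg (abs_nonneg (f ω)) (θ * a))
    (ae_of_all μ fun ω => Real.rpow_nonneg (abs_nonneg (f ω)) (η * b))
    (memLp hθ hfa) (memLp hη hfb)
  simp only [rpow_rpow_inv a hθ, rpow_rpow_inv b hη, one_div, inv_inv] at holder
  refine le_of_eq_of_le (integral_congr_ae (ae_of_all μ fun ω => ?_)) holder
  exact Real.rpow_add_of_nonneg (abs_nonneg _) (by positivity) (by positivity)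

lemma rpow_integral_abs_rpow_le_of_exp_abs_div {p σ M : ℝ} (hp : 0 < p) (hσ : 0 < σ)
    (hexp : Integrable (fun ω => Real.exp (|f ω| / σ)) μ)
    (hM : ∫ ω, Real.exp (|f ω| / σ) ∂μ ≤ M) :
    (∫ ω, |f ω| ^ p ∂μ) ^ (1 / p) ≤ p * M ^ (1 / p) * σ := by
  have hM0 : 0 ≤ M := (integral_nonneg fun ω => (Real.exp_pos _).le).trans hM
  calc (∫ ω, |f ω| ^ p ∂μ) ^ (1 / p)
      ≤ ((p * σ) ^ p * M) ^ (1 / p) := by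
        gcongr
        exact integral_abs_rpow_le_of_exp_abs_div hp.le hσ hexp hM
    _ = p * M ^ (1 / p) * σ := by
        rw [Real.mul_rpow (by positivity) hM0, ← Real.rpow_mul (by positivity),
          mul_one_div_cancel hp.ne', Real.rpow_one]
        ring

lemma rpow_integral_sq_le_mul {p : ℝ} (hp : 0 < p) (hf : AEMeasurable f μ)
    (hfp : Integrable (fun ω => |f ω| ^ p) μ)
    (hfr : Integrable (fun ω => |f ω| ^ ((p + 2) / p)) μ) :
    (∫ ω, f ω ^ 2 ∂μ) ^ ((p + 1) / p) ≤
      (∫ ω, |f ω| ^ p ∂μ) ^ (1 / p) * ∫ ω, |f ω| ^ ((p + 2) / p) ∂μ := by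
  have lyapunov := integral_abs_rpow_add_le (θ := 1 / (p + 1)) (η := p / (p + 1)) hp.le
    (by positivity) (by positivity) (by positivity) (by field_simp; ring) hf hfp hfr
  have hexponent : 1 / (p + 1) * p + p / (p + 1) * ((p + 2) / p) = 2 := by field_simp; ring
  simp only [hexponent, Real.rpow_two, sq_abs] at lyapunov
  have hIp : 0 ≤ ∫ ω, |f ω| ^ p ∂μ := integral_nonneg fun ω => by positivity
  have hIr : 0 ≤ ∫ ω, |f ω| ^ ((p + 2) / p) ∂μ := integral_nonneg fun ω => by positivity
  calc (∫ ω, f ω ^ 2 ∂μ) ^ ((p + 1) / p)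
      ≤ ((∫ ω, |f ω| ^ p ∂μ) ^ (1 / (p + 1)) *
          (∫ ω, |f ω| ^ ((p + 2) / p) ∂μ) ^ (p / (p + 1))) ^ ((p + 1) / p) :=
        Real.rpow_le_rpow (integral_nonneg fun ω => sq_nonneg _) lyapunov (by positivity)
    _ = (∫ ω, |f ω| ^ p ∂μ) ^ (1 / p) * ∫ ω, |f ω| ^ ((p + 2) / p) ∂μ := by
        rw [Real.mul_rpow (by positivity) (by positivity), ← Real.rpow_mul hIp,
          ← Real.rpow_mul hIr, div_mul_div_cancel₀ (by positivity),
          div_mul_div_cancel₀ (by positivity), div_self hp.ne', Real.rpow_one]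

lemma le_rpow_integral_abs_rpow_of_exp_abs_div {p σ M : ℝ} (hp : 0 < p) (hσ : 0 < σ)
    (hf : AEMeasurable f μ) (hsq : ∫ ω, f ω ^ 2 ∂μ = σ ^ 2)
    (hexp : Integrable (fun ω => Real.exp (|f ω| / σ)) μ) (hM0 : 0 < M)
    (hM : ∫ ω, Real.exp (|f ω| / σ) ∂μ ≤ M) :
    (((p + 2) / p) ^ ((p + 2) / p) * M)⁻¹ * σ ≤ (∫ ω, |f ω| ^ p ∂μ) ^ (1 / p) := by
  have hr : 0 ≤ (p + 2) / p := by positivity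
  have key := (rpow_integral_sq_le_mul hp hf
    (integrable_abs_rpow_of_exp_abs_div hp.le hσ hf hexp)
    (integrable_abs_rpow_of_exp_abs_div hr hσ hf hexp)).trans
    (mul_le_mul_of_nonneg_left (integral_abs_rpow_le_of_exp_abs_div hr hσ hexp hM)
      (Real.rpow_nonneg (integral_nonneg fun ω => by positivity) _))
  have hσpow : (σ ^ 2) ^ ((p + 1) / p) = σ * σ ^ ((p + 2) / p) := by
    rw [← Real.rpow_natCast, ← Real.rpow_mul hσ.le, ← Real.rpow_one_add' hσ.le (by positivity)]
    congr 1
    push_cast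
    field_simp
    ring
  rw [hsq, hσpow, Real.mul_rpow (by positivity) hσ.le] at key
  rw [inv_mul_le_iff₀ (by positivity)]
  refine le_of_mul_le_mul_right ?_ (Real.rpow_pos_of_pos hσ ((p + 2) / p))
  linarith

lemma hasSubgaussianMGF_of_le {X : Ω → ℝ} {c c' : NNReal} (hX : HasSubgaussianMGF X c μ)
    (hc : c ≤ c') : HasSubgaussianMGF X c' μ where
  integrable_exp_mul := hX.integrable_exp_mul
  mgf_le t := (hX.mgf_le t).trans (by gcongr)

lemma integral_exp_mul_abs_le_of_hasSubgaussianMGF {X : Ω → ℝ} {c : NNReal}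
    (hX : HasSubgaussianMGF X c μ) (t : ℝ) :
    ∫ ω, Real.exp (t * |X ω|) ∂μ ≤ 2 * Real.exp (c * t ^ 2 / 2) := by
  have hint (t : ℝ) : Integrable (fun ω => Real.exp (t * X ω)) μ := hX.integrable_exp_mul t
  calc ∫ ω, Real.exp (t * |X ω|) ∂μ
      ≤ ∫ ω, (Real.exp (t * X ω) + Real.exp (-t * X ω)) ∂μ := by
        refine integral_mono (integrable_exp_mul_abs (hint t) (hint (-t)))
          ((hint t).add (hint (-t))) fun ω => ?_
        rcases abs_cases (X ω) with ⟨h, -⟩ | ⟨h, -⟩ <;> simp [h, Real.exp_nonneg]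
    _ = mgf X μ t + mgf X μ (-t) := integral_add (hint t) (hint (-t))
    _ ≤ Real.exp (c * t ^ 2 / 2) + Real.exp (c * (-t) ^ 2 / 2) :=
        add_le_add (hX.mgf_le t) (hX.mgf_le (-t))
    _ = 2 * Real.exp (c * t ^ 2 / 2) := by rw [neg_sq, two_mul]

lemma exp_mul_abs_add_le {t x y B : ℝ} (ht : 0 ≤ t) (hy : |y| ≤ B) :
    Real.exp (t * |y + x|) ≤ Real.exp (t * B) * Real.exp (t * |x|) := by
  rw [← Real.exp_add, ← mul_add]
  have := (abs_add_le y x).trans (add_le_add_left hy _)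
  gcongr

variable {X Y : Ω → ℝ} {c : NNReal} {B t : ℝ}

lemma integrable_exp_mul_abs_add (hX : HasSubgaussianMGF X c μ) (hY : AEMeasurable Y μ)
    (hB : ∀ ω, |Y ω| ≤ B) (ht : 0 ≤ t) :
    Integrable (fun ω => Real.exp (t * |Y ω + X ω|)) μ := by
  have hXexp : Integrable (fun ω => Real.exp (t * |X ω|)) μ :=
    integrable_exp_mul_abs (hX.integrable_exp_mul t) (hX.integrable_exp_mul (-t))
  refine (hXexp.const_mul (Real.exp (t * B))).mono'
    ((hY.add hX.aemeasurable).abs.const_mul t).exp.aestronglyMeasurable ?_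
  filter_upwards with ω
  rw [Real.norm_of_nonneg (Real.exp_nonneg _)]
  exact exp_mul_abs_add_le ht (hB ω)

lemma integral_exp_mul_abs_add_le (hX : HasSubgaussianMGF X c μ) (hB : ∀ ω, |Y ω| ≤ B)
    (ht : 0 ≤ t) :
    ∫ ω, Real.exp (t * |Y ω + X ω|) ∂μ ≤
      Real.exp (t * B) * (2 * Real.exp (c * t ^ 2 / 2)) :=
  calc ∫ ω, Real.exp (t * |Y ω + X ω|) ∂μ
      ≤ ∫ ω, Real.exp (t * B) * Real.exp (t * |X ω|) ∂μ :=
        integral_mono_of_nonneg (ae_of_all μ fun ω => Real.exp_nonneg _)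
          ((integrable_exp_mul_abs (hX.integrable_exp_mul t)
            (hX.integrable_exp_mul (-t))).const_mul _)
          (ae_of_all μ fun ω => exp_mul_abs_add_le ht (hB ω))
    _ ≤ Real.exp (t * B) * (2 * Real.exp (c * t ^ 2 / 2)) := by
        rw [integral_const_mul]
        gcongr
        exact integral_exp_mul_abs_le_of_hasSubgaussianMGF hX t

end Moments

section Rademacher

open Finset ProbabilityTheory

lemma measurable_rademacher (k : ℕ) : Measurable (rademacher k) := by
  have measurable_sign : Measurable Real.sign :=
    .ite measurableSet_Iio measurable_const
      (.ite measurableSet_Ioi measurable_const measurable_const)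
  exact measurable_sign.comp (by fun_prop)

lemma abs_rademacher_le_one (k : ℕ) (t : ℝ) : |rademacher k t| ≤ 1 := by
  rcases Real.sign_apply_eq (Real.sin (2 ^ k * Real.pi * t)) with h | h | h <;>
    simp [rademacher, h]

lemma rademacher_succ (k : ℕ) (t : ℝ) : rademacher (k + 1) t = rademacher k (2 * t) := by
  simp only [rademacher]
  ring_nf

lemma periodic_rademacher_succ (k : ℕ) : Function.Periodic (rademacher (k + 1)) 1 := fun t => by
  have harg : (2 : ℝ) ^ (k + 1) * Real.pi * (t + 1) =
      2 ^ (k + 1) * Real.pi * t + ((2 ^ k : ℕ) : ℝ) * (2 * Real.pi) := by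
    push_cast
    ring
  simp only [rademacher, harg, Real.sin_add_nat_mul_two_pi]

lemma rademacher_one_of_mem_Ioo_left {t : ℝ} (ht : t ∈ Set.Ioo 0 (1 / 2)) : rademacher 1 t = 1 :=
  Real.sign_of_pos <| Real.sin_pos_of_pos_of_lt_pi (by have := ht.1; positivity)
    (by nlinarith [ht.2, Real.pi_pos])

lemma rademacher_one_of_mem_Ioo_right {t : ℝ} (ht : t ∈ Set.Ioo (1 / 2) 1) :
    rademacher 1 t = -1 := by
  apply Real.sign_of_neg
  rw [← Real.sin_sub_two_pi]
  apply Real.sin_neg_of_neg_of_neg_pi_lt <;> nlinarith [ht.1, ht.2, Real.pi_pos]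

lemma integral_comp_rademacher_one_mul {f : ℝ → ℝ} (hf : Function.Periodic f 1)
    (hint : IntervalIntegrable f volume 0 1) (g : ℝ → ℝ) :
    ∫ t in (0 : ℝ)..1, g (rademacher 1 t) * f (2 * t) =
      (g 1 + g (-1)) / 2 * ∫ t in (0 : ℝ)..1, f t := by
  have hint' (a b : ℝ) : IntervalIntegrable (fun t => f (2 * t)) volume a b := by
    simpa using (hf.intervalIntegrable₀ one_ne_zero hint (2 * a) (2 * b)).comp_mul_left (c := 2)
  have left : Set.EqOn (fun t => g 1 * f (2 * t)) (fun t => g (rademacher 1 t) * f (2 * t))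
      (Set.uIoo 0 (1 / 2)) := fun t ht => by
    rw [Set.uIoo_of_le (by norm_num)] at ht
    simp only [rademacher_one_of_mem_Ioo_left ht]
  have right : Set.EqOn (fun t => g (-1) * f (2 * t)) (fun t => g (rademacher 1 t) * f (2 * t))
      (Set.uIoo (1 / 2) 1) := fun t ht => by
    rw [Set.uIoo_of_le (by norm_num)] at ht
    simp only [rademacher_one_of_mem_Ioo_right ht]
  have hperiod : ∫ t in (1 : ℝ)..2, f t = ∫ t in (0 : ℝ)..1, f t := by
    simpa [one_add_one_eq_two] using hf.intervalIntegral_add_eq 1 0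
  rw [← intervalIntegral.integral_add_adjacent_intervals
      (((hint' _ _).const_mul _).congr_uIoo left) (((hint' _ _).const_mul _).congr_uIoo right),
    ← intervalIntegral.integral_congr_uIoo left, ← intervalIntegral.integral_congr_uIoo right]
  simp only [intervalIntegral.integral_const_mul, intervalIntegral.integral_comp_mul_left f
    two_ne_zero, smul_eq_mul, mul_zero, mul_one, mul_one_div_cancel (two_ne_zero' ℝ), hperiod]
  ring

lemma measurable_prod_rademacher {S : Finset ℕ} {g : ℕ → ℝ → ℝ}
    (hg : ∀ k ∈ S, Measurable (g k)) :
    Measurable fun t => ∏ k ∈ S, g k (rademacher (k + 1) t) :=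
  Finset.measurable_fun_prod S fun k hk => (hg k hk).comp (measurable_rademacher (k + 1))

lemma abs_prod_rademacher_le (S : Finset ℕ) (g : ℕ → ℝ → ℝ) (t : ℝ) :
    |∏ k ∈ S, g k (rademacher (k + 1) t)| ≤ ∏ k ∈ S, (|g k (-1)| + |g k 0| + |g k 1|) := by
  rw [Finset.abs_prod]
  refine Finset.prod_le_prod (fun k _ => abs_nonneg _) fun k _ => ?_
  have := abs_nonneg (g k (-1))
  have := abs_nonneg (g k 0)
  have := abs_nonneg (g k 1)
  rcases Real.sign_apply_eq (Real.sin (2 ^ (k + 1) * Real.pi * t)) with h | h | h <;>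
    rw [rademacher, h] <;> linarith

lemma intervalIntegrable_prod_rademacher {S : Finset ℕ} {g : ℕ → ℝ → ℝ}
    (hg : ∀ k ∈ S, Measurable (g k)) (a b : ℝ) :
    IntervalIntegrable (fun t => ∏ k ∈ S, g k (rademacher (k + 1) t)) volume a b :=
  (intervalIntegrable_const (c := ∏ k ∈ S, (|g k (-1)| + |g k 0| + |g k 1|))).mono_fun
    (measurable_prod_rademacher hg).aestronglyMeasurable
    (ae_of_all _ fun t => (abs_prod_rademacher_le S g t).trans (le_abs_self _))

-- The first Rademacher function only sees the half of `[0, 1]` containing `t`, while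
-- `r_{k+1}(t) = r_k(2t)` reproduces the remaining product on either half.
lemma integral_prod_range_rademacher {M : ℕ} {g : ℕ → ℝ → ℝ}
    (hg : ∀ k ∈ range M, Measurable (g k)) :
    ∫ t in (0 : ℝ)..1, ∏ k ∈ range M, g k (rademacher (k + 1) t) =
      ∏ k ∈ range M, (g k 1 + g k (-1)) / 2 := by
  induction M generalizing g with
  | zero => simp
  | succ M ih =>
    have hg' : ∀ k ∈ range M, Measurable (g (k + 1)) := fun k hk =>
      hg _ (mem_range.2 (Nat.succ_lt_succ (mem_range.1 hk)))
    have hperiodic : Function.Periodic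
        (fun t => ∏ k ∈ range M, g (k + 1) (rademacher (k + 1) t)) 1 := fun t => by
      simp only [periodic_rademacher_succ _ t]
    calc ∫ t in (0 : ℝ)..1, ∏ k ∈ range (M + 1), g k (rademacher (k + 1) t)
        = ∫ t in (0 : ℝ)..1, g 0 (rademacher 1 t) *
            ∏ k ∈ range M, g (k + 1) (rademacher (k + 1) (2 * t)) := by
          simp only [prod_range_succ', rademacher_succ (_ + 1), zero_add, mul_comm]
      _ = (g 0 1 + g 0 (-1)) / 2 *
            ∫ t in (0 : ℝ)..1, ∏ k ∈ range M, g (k + 1) (rademacher (k + 1) t) :=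
          integral_comp_rademacher_one_mul hperiodic
            (intervalIntegrable_prod_rademacher hg' 0 1) (g 0)
      _ = ∏ k ∈ range (M + 1), (g k 1 + g k (-1)) / 2 := by
          rw [ih hg', prod_range_succ', mul_comm]

/-- Lebesgue measure on `[0, 1]`, as a measure on the whole line. -/
noncomputable abbrev lebesgue01 : Measure ℝ := volume.restrict (Set.Icc 0 1)

instance : IsProbabilityMeasure lebesgue01 := ⟨by simp⟩

lemma integral_lebesgue01 (f : ℝ → ℝ) : ∫ t, f t ∂lebesgue01 = ∫ t in (0 : ℝ)..1, f t := by
  rw [integral_Icc_eq_integral_Ioc, intervalIntegral.integral_of_le zero_le_one]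

lemma integral_prod_rademacher {S : Finset ℕ} {g : ℕ → ℝ → ℝ}
    (hg : ∀ k ∈ S, Measurable (g k)) :
    ∫ t, ∏ k ∈ S, g k (rademacher (k + 1) t) ∂lebesgue01 =
      ∏ k ∈ S, (g k 1 + g k (-1)) / 2 := by
  obtain ⟨M, hM⟩ := S.exists_nat_subset_range
  have hext (F : ℕ → (ℝ → ℝ) → ℝ) (hF : ∀ k, F k (fun _ => 1) = 1) :
      ∏ k ∈ S, F k (g k) = ∏ k ∈ range M, F k (if k ∈ S then g k else fun _ => 1) :=
    (prod_congr rfl fun k hk => by rw [if_pos hk]).trans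
      (prod_subset hM fun k _ hk => by rw [if_neg hk, hF])
  rw [integral_lebesgue01, hext (fun _ u => (u 1 + u (-1)) / 2) fun _ => by norm_num]
  have hprod (t : ℝ) := hext (fun k u => u (rademacher (k + 1) t)) fun _ => rfl
  simp only [hprod]
  refine integral_prod_range_rademacher fun k _ => ?_
  split_ifs with hk
  exacts [hg k hk, measurable_const]

lemma integral_comp_rademacher {k : ℕ} {g : ℝ → ℝ} (hg : Measurable g) :
    ∫ t, g (rademacher (k + 1) t) ∂lebesgue01 = (g 1 + g (-1)) / 2 := by
  simpa using integral_prod_rademacher (S := {k}) (g := fun _ => g) fun _ _ => hg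

theorem iIndepFun_rademacher : iIndepFun (fun k => rademacher (k + 1)) lebesgue01 := by
  rw [iIndepFun_iff_measure_inter_preimage_eq_mul]
  intro S sets hsets
  have hmeas (k) (hk : k ∈ S) : MeasurableSet (rademacher (k + 1) ⁻¹' sets k) :=
    measurable_rademacher (k + 1) (hsets k hk)
  have hind (k) (hk : k ∈ S) : Measurable ((sets k).indicator (1 : ℝ → ℝ)) :=
    measurable_one.indicator (hsets k hk)
  rw [← ENNReal.toReal_eq_toReal_iff' (measure_ne_top _ _)
    (ENNReal.prod_ne_top fun _ _ => measure_ne_top _ _), ENNReal.toReal_prod]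
  calc lebesgue01.real (⋂ k ∈ S, rademacher (k + 1) ⁻¹' sets k)
      = ∫ t, ∏ k ∈ S, (sets k).indicator 1 (rademacher (k + 1) t) ∂lebesgue01 := by
        rw [← integral_indicator_one (Finset.measurableSet_biInter S hmeas)]
        congr 1 with t
        have h := prod_indicator_const_apply S (fun k => rademacher (k + 1) ⁻¹' sets k)
          (1 : ℝ → ℝ) t
        rw [one_pow] at h
        exact h.symm
    _ = ∏ k ∈ S, ∫ t, (sets k).indicator 1 (rademacher (k + 1) t) ∂lebesgue01 := by
        rw [integral_prod_rademacher hind]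
        exact prod_congr rfl fun k hk => (integral_comp_rademacher (hind k hk)).symm
    _ = ∏ k ∈ S, lebesgue01.real (rademacher (k + 1) ⁻¹' sets k) :=
        prod_congr rfl fun k hk => integral_indicator_one (hmeas k hk)

lemma hasSubgaussianMGF_rademacher (k : ℕ) :
    HasSubgaussianMGF (rademacher (k + 1)) 1 lebesgue01 := by
  have hoeffding := hasSubgaussianMGF_of_mem_Icc_of_integral_eq_zero (a := -1) (b := 1)
    (measurable_rademacher (k + 1)).aemeasurable
    (ae_of_all lebesgue01 fun t => abs_le.1 (abs_rademacher_le_one (k + 1) t))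
    (by simpa using integral_comp_rademacher (k := k) measurable_id)
  have hparam : (‖(1 : ℝ) - -1‖₊ / 2) ^ 2 = 1 := by
    ext
    norm_num
  rwa [hparam] at hoeffding

theorem hasSubgaussianMGF_sum_mul_rademacher (S : Finset ℕ) (a : ℕ → ℝ) :
    HasSubgaussianMGF (fun t => ∑ k ∈ S, a k * rademacher (k + 1) t) (∑ k ∈ S, ‖a k‖₊ ^ 2)
      lebesgue01 := by
  have hindep : iIndepFun (fun k t => a k * rademacher (k + 1) t) lebesgue01 :=
    iIndepFun_rademacher.comp (fun k x => a k * x) fun k => measurable_const_mul (a k)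
  refine HasSubgaussianMGF.sum_of_iIndepFun hindep fun k _ => ?_
  have hparam : (.mk (a k ^ 2) (sq_nonneg (a k)) * 1 : NNReal) = ‖a k‖₊ ^ 2 := by
    ext
    simp [NNReal.coe_mk]
  exact hparam ▸ (hasSubgaussianMGF_rademacher k).const_mul (a k)

end Rademacher

section Walsh

open Finset

lemma measurable_walsh (n : ℕ) : Measurable (walsh n) :=
  Finset.measurable_fun_prod _ fun k _ => by
    split_ifs
    exacts [measurable_rademacher (k + 1), measurable_const]

lemma abs_walsh_le_one (n : ℕ) (t : ℝ) : |walsh n t| ≤ 1 := by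
  rw [walsh, Finset.abs_prod]
  refine Finset.prod_le_one (fun _ _ => abs_nonneg _) fun k _ => ?_
  split_ifs
  exacts [abs_rademacher_le_one (k + 1) t, abs_one.le]

lemma testBit_eq_false_of_le {n j : ℕ} (h : n ≤ j) : n.testBit j = false :=
  Nat.testBit_lt_two_pow (h.trans_lt Nat.lt_two_pow_self)

lemma walsh_eq_prod_range {n M : ℕ} (h : n ≤ M) (t : ℝ) :
    walsh n t = ∏ j ∈ range M, if n.testBit j then rademacher (j + 1) t else 1 :=
  prod_subset (range_mono h) fun j _ hj => by
    simp [testBit_eq_false_of_le (not_lt.1 (mem_range.not.1 hj))]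

lemma walsh_two_pow (l : ℕ) : walsh (2 ^ l) = rademacher (l + 1) := by
  ext t
  simp [walsh, Nat.testBit_two_pow, Nat.lt_two_pow_self]

lemma eq_iff_forall_mem_range_max_testBit_eq {m n : ℕ} :
    m = n ↔ ∀ j ∈ range (max m n), m.testBit j = n.testBit j := by
  refine ⟨by rintro rfl; simp, fun h => Nat.eq_of_testBit_eq fun j => ?_⟩
  by_cases hj : j ∈ range (max m n)
  · exact h j hj
  · have hj' : max m n ≤ j := not_lt.1 (mem_range.not.1 hj)
    rw [testBit_eq_false_of_le ((le_max_left m n).trans hj'),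
      testBit_eq_false_of_le ((le_max_right m n).trans hj')]

theorem integral_walsh_mul_walsh (m n : ℕ) :
    ∫ t, walsh m t * walsh n t ∂lebesgue01 = if m = n then 1 else 0 := by
  let g (j : ℕ) (y : ℝ) : ℝ := (if m.testBit j then y else 1) * if n.testBit j then y else 1
  have hmean (j : ℕ) : (g j 1 + g j (-1)) / 2 = if m.testBit j = n.testBit j then 1 else 0 := by
    cases hm : m.testBit j <;> cases hn : n.testBit j <;> norm_num [g, hm, hn]
  calc ∫ t, walsh m t * walsh n t ∂lebesgue01
      = ∫ t, ∏ j ∈ range (max m n), g j (rademacher (j + 1) t) ∂lebesgue01 := by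
        simp only [walsh_eq_prod_range (le_max_left m n), walsh_eq_prod_range (le_max_right m n),
          ← prod_mul_distrib, g]
    _ = ∏ j ∈ range (max m n), (g j 1 + g j (-1)) / 2 :=
        integral_prod_rademacher fun j _ => by dsimp only [g]; split_ifs <;> fun_prop
    _ = if m = n then 1 else 0 := by
        simp only [hmean, prod_ite_zero, prod_const_one, ← eq_iff_forall_mem_range_max_testBit_eq]

lemma integrable_walsh_mul_walsh (m n : ℕ) :
    Integrable (fun t => walsh m t * walsh n t) lebesgue01 := by
  refine Integrable.of_bound ((measurable_walsh m).mul (measurable_walsh n)).aestronglyMeasurable 1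
    (ae_of_all _ fun t => ?_)
  rw [norm_mul]
  exact mul_le_one₀ (abs_walsh_le_one m t) (norm_nonneg _) (abs_walsh_le_one n t)

theorem integral_sq_sum_mul_walsh {ι : Type*} {s : Finset ι} {w : ι → ℕ} (hw : Set.InjOn w s)
    (b : ι → ℝ) :
    ∫ t, (∑ x ∈ s, b x * walsh (w x) t) ^ 2 ∂lebesgue01 = ∑ x ∈ s, b x ^ 2 := by
  have hint (x y : ι) : Integrable
      (fun t => b x * b y * (walsh (w x) t * walsh (w y) t)) lebesgue01 :=
    (integrable_walsh_mul_walsh _ _).const_mul _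
  calc ∫ t, (∑ x ∈ s, b x * walsh (w x) t) ^ 2 ∂lebesgue01
      = ∫ t, ∑ x ∈ s, ∑ y ∈ s, b x * b y * (walsh (w x) t * walsh (w y) t) ∂lebesgue01 := by
        simp only [sq, sum_mul_sum, mul_mul_mul_comm]
    _ = ∑ x ∈ s, ∑ y ∈ s, b x * b y * if w x = w y then 1 else 0 := by
        rw [integral_finsetSum _ fun x _ => integrable_finsetSum _ fun y _ => hint x y]
        simp only [integral_finsetSum _ fun y _ => hint _ y, integral_const_mul,
          integral_walsh_mul_walsh]
    _ = ∑ x ∈ s, b x ^ 2 := sum_congr rfl fun x hx => by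
        rw [sum_eq_single_of_mem x hx fun y hy hne =>
          by rw [if_neg fun h => hne (hw hy hx h.symm), mul_zero], if_pos rfl, mul_one, sq]

end Walsh

section Olevskii

open Finset

lemma sum_range_two_pow {M : Type*} [AddCommMonoid M] (k : ℕ) (f : ℕ → M) :
    ∑ j ∈ range (2 ^ k), f j = f 0 + ∑ s ∈ range k, ∑ v ∈ range (2 ^ s), f (2 ^ s + v) := by
  induction k with
  | zero => simp
  | succ k ih => rw [sum_range_succ, ← add_assoc, ← ih, pow_succ, mul_two, sum_range_add]

lemma two_rpow_half_mul_self (x : ℝ) : (2 : ℝ) ^ (x / 2) * 2 ^ (x / 2) = 2 ^ x := by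
  rw [← Real.rpow_add two_pos, add_halves]

lemma olevskii_level {k s v : ℕ} (i : ℕ) (hs : s < k) (hv : v < 2 ^ s) :
    olevskii k (i + 1) (2 ^ s + v + 1) =
      if v = i / 2 ^ (k - s) then (2 : ℝ) ^ (((s : ℝ) - k) / 2) * (-1) ^ (i / 2 ^ (k - s - 1))
      else 0 := by
  obtain ⟨d, rfl⟩ := Nat.exists_eq_add_of_lt hs
  have hs0 : 0 < 2 ^ s := by positivity
  have hd0 : 0 < 2 ^ d := by positivity
  have hlog : Nat.log 2 (2 ^ s + v) = s :=
    Nat.log_eq_of_pow_le_of_lt_pow (by omega) (by rw [pow_succ]; omega)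
  have hd : s + d + 1 - s = d + 1 := by omega
  have hν : 2 ^ s + v + 1 - 2 ^ s = v + 1 := by omega
  have hlt (c : ℕ) : c * 2 ^ d < i + 1 ↔ c ≤ i / 2 ^ d := by
    rw [Nat.le_div_iff_mul_le hd0, Nat.lt_succ_iff]
  have hle (c : ℕ) : i + 1 ≤ c * 2 ^ d ↔ i / 2 ^ d < c := by
    rw [Nat.div_lt_iff_lt_mul hd0, Nat.succ_le_iff]
  have hhalf : i / (2 * 2 ^ d) = i / 2 ^ d / 2 := by rw [mul_comm, Nat.div_div_eq_div_mul]
  simp only [olevskii, if_neg (show 2 ^ s + v + 1 ≠ 1 by omega), Nat.add_sub_cancel, hlog, hν, hd,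
    pow_succ' 2 d, ← mul_assoc, hlt, hle, hhalf]
  rcases Nat.even_or_odd (i / 2 ^ d) with h | h <;> rw [h.neg_one_pow] <;>
    obtain ⟨c, hc⟩ := h <;> split_ifs <;> first | omega | ring

lemma ite_div_two_eq_neg_one_pow_mul (a b : ℕ) :
    (if a / 2 = b / 2 then (-1 : ℝ) ^ a * (-1) ^ b else 0) =
      (if a = b then 2 else 0) - if a / 2 = b / 2 then 1 else 0 := by
  rcases Nat.even_or_odd a with ha | ha <;> rcases Nat.even_or_odd b with hb | hb <;>
    rw [ha.neg_one_pow, hb.neg_one_pow] <;> obtain ⟨c, rfl⟩ := ha <;> obtain ⟨d, rfl⟩ := hb <;>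
    split_ifs <;> first | omega | norm_num

-- The Haar functions of level `s` contribute the increment, from scale `s` to scale `s + 1`,
-- of the kernel `2 ^ s / 2 ^ k * 1_{i, i' in the same dyadic block of length 2 ^ (k - s)}`.
lemma sum_olevskii_level_mul {k s i : ℕ} (i' : ℕ) (hs : s < k) (hi : i < 2 ^ k) :
    ∑ v ∈ range (2 ^ s), olevskii k (i + 1) (2 ^ s + v + 1) * olevskii k (i' + 1) (2 ^ s + v + 1) =
      (if i / 2 ^ (k - (s + 1)) = i' / 2 ^ (k - (s + 1)) then (2 : ℝ) ^ (s + 1) / 2 ^ k else 0) -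
        if i / 2 ^ (k - s) = i' / 2 ^ (k - s) then (2 : ℝ) ^ s / 2 ^ k else 0 := by
  have hi' : i / 2 ^ (k - s) < 2 ^ s := by
    rwa [Nat.div_lt_iff_lt_mul (by positivity), ← pow_add, Nat.add_sub_cancel' hs.le]
  have hhalf (n : ℕ) : n / 2 ^ (k - s) = n / 2 ^ (k - (s + 1)) / 2 := by
    rw [Nat.div_div_eq_div_mul, ← pow_succ]
    congr 2
    omega
  have hnorm : (2 : ℝ) ^ (((s : ℝ) - k) / 2) * 2 ^ (((s : ℝ) - k) / 2) = 2 ^ s / 2 ^ k := by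
    rw [two_rpow_half_mul_self, Real.rpow_sub two_pos, Real.rpow_natCast, Real.rpow_natCast]
  have hsign := ite_div_two_eq_neg_one_pow_mul (i / 2 ^ (k - (s + 1))) (i' / 2 ^ (k - (s + 1)))
  rw [← hhalf, ← hhalf] at hsign
  rw [sum_eq_single_of_mem _ (mem_range.2 hi') fun v hv hne => by
    rw [olevskii_level i hs (mem_range.1 hv), if_neg hne, zero_mul],
    olevskii_level i hs hi', olevskii_level i' hs hi', if_pos rfl, Nat.sub_sub]
  calc _ = 2 ^ s / 2 ^ k * (if i / 2 ^ (k - s) = i' / 2 ^ (k - s) then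
        (-1 : ℝ) ^ (i / 2 ^ (k - (s + 1))) * (-1) ^ (i' / 2 ^ (k - (s + 1))) else 0) := by
        rw [← hnorm]
        split_ifs <;> ring
    _ = _ := by
        rw [hsign]
        split_ifs <;> ring

theorem sum_olevskii_mul_olevskii {k i i' : ℕ} (hi : i < 2 ^ k) (hi' : i' < 2 ^ k) :
    ∑ j ∈ range (2 ^ k), olevskii k (i + 1) (j + 1) * olevskii k (i' + 1) (j + 1) =
      if i = i' then 1 else 0 := by
  have hfirst : olevskii k (i + 1) 1 * olevskii k (i' + 1) 1 =
      if i / 2 ^ (k - 0) = i' / 2 ^ (k - 0) then (2 : ℝ) ^ 0 / 2 ^ k else 0 := by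
    simp [olevskii, two_rpow_half_mul_self, Nat.div_eq_of_lt hi, Nat.div_eq_of_lt hi',
      Real.rpow_neg]
  rw [sum_range_two_pow, zero_add, hfirst,
    sum_congr rfl fun s hs => sum_olevskii_level_mul i' (mem_range.1 hs) hi,
    sum_range_sub (fun s => if i / 2 ^ (k - s) = i' / 2 ^ (k - s) then (2 : ℝ) ^ s / 2 ^ k else 0)]
  simp

lemma olevskii_ten_pow_one (k i : ℕ) : olevskii (10 ^ k) i 1 = 1 / √(Nn k) := by
  have hpos : (0 : ℝ) < 2 ^ (((10 ^ k : ℕ) : ℝ) / 2) := by positivity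
  have hsqrt : √(Nn k : ℝ) = 2 ^ (((10 ^ k : ℕ) : ℝ) / 2) := by
    rw [Real.sqrt_eq_iff_mul_self_eq_of_pos hpos, two_rpow_half_mul_self, Real.rpow_natCast]
    simp [Nn]
  simp [olevskii, hsqrt, neg_div, Real.rpow_neg]

end Olevskii

section Lacunary

open Finset

lemma sum_range_le_of_two_mul_le {a u : ℕ → ℝ} (hu0 : 0 ≤ u 0) (hu : ∀ k, 2 * u k ≤ u (k + 1))
    (hau : ∀ k, a k ≤ u k) (K : ℕ) : ∑ k ∈ range K, a k ≤ u K := by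
  induction K with
  | zero => simpa using hu0
  | succ K ih => rw [sum_range_succ]; linarith [hau K, hu K]

-- The terms grow at least geometrically while `u k < x` and decay geometrically afterwards.
lemma sum_range_le_four_mul_of_lacunary {a u : ℕ → ℝ} {x : ℝ} (hu0 : ∀ k, 0 < u k)
    (hu : ∀ k, 2 * u k ≤ u (k + 1)) (hau : ∀ k, a k ≤ u k) (hax : ∀ k, a k ≤ x ^ 2 / u k)
    (hx : 0 ≤ x) (K : ℕ) : ∑ k ∈ range K, a k ≤ 4 * x := by
  have hle := sum_range_le_of_two_mul_le (hu0 0).le hu hau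
  suffices hlarge : ∀ K, x ≤ u K → ∑ k ∈ range K, a k ≤ 4 * x - 2 * (x ^ 2 / u K) by
    rcases le_total x (u K) with hK | hK
    · have := div_nonneg (sq_nonneg x) (hu0 K).le
      linarith [hlarge K hK]
    · linarith [hle K]
  have hdiv (K : ℕ) (hK : x ≤ u K) : x ^ 2 / u K ≤ x := by
    rw [div_le_iff₀ (hu0 K)]
    nlinarith
  intro K
  induction K with
  | zero =>
    intro h0
    rw [range_zero, sum_empty]
    linarith [hdiv 0 h0]
  | succ K ih =>
    intro hK
    rw [sum_range_succ]
    rcases le_total x (u K) with h | h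
    · have hhalf : 2 * (x ^ 2 / u (K + 1)) ≤ x ^ 2 / u K := by
        rw [← mul_div_assoc, div_le_div_iff₀ (hu0 _) (hu0 _)]
        nlinarith [hu K, sq_nonneg x]
      linarith [ih h, hax K]
    · linarith [hle K, hau K, hdiv (K + 1) hK]

end Lacunary

section Blocks

lemma Nn_pos (k : ℕ) : 0 < Nn k := Nat.two_pow_pos _

lemma four_mul_Nn_le (k : ℕ) : 4 * Nn k ≤ Nn (k + 1) := by
  have hexp : 2 + 10 ^ k ≤ 10 ^ (k + 1) := by
    have := Nat.one_le_pow k 10 (by norm_num)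
    rw [pow_succ]
    omega
  calc 4 * Nn k = 2 ^ (2 + 10 ^ k) := by rw [pow_add]; rfl
    _ ≤ Nn (k + 1) := Nat.pow_le_pow_right two_pos hexp

lemma Fn_succ (k : ℕ) : Fn (k + 1) = Fn k + (Nn (k + 1) - 1) :=
  Nat.add_sub_assoc (Nn_pos (k + 1)) (Fn k)

lemma monotone_Fn : Monotone Fn :=
  monotone_nat_of_le_succ fun k => by rw [Fn_succ]; exact Nat.le_add_right _ _

/-- The `0`-based number of the block of the system `B` that contains `psi m`. -/
def blockIndex (m : ℕ) : ℕ :=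
  Nat.find (show ∃ k, m + 1 ≤ cum k from ⟨m + 1, le_cum (m + 1)⟩) - 1

/-- The `0`-based position of `psi m` inside its block. -/
def blockPos (m : ℕ) : ℕ := m - cum (blockIndex m)

lemma find_le_cum_eq (m : ℕ) :
    Nat.find (show ∃ k, m + 1 ≤ cum k from ⟨m + 1, le_cum (m + 1)⟩) = blockIndex m + 1 :=
  (Nat.succ_pred_eq_of_pos ((Nat.find_pos _).2 (by simp [cum]))).symm

lemma cum_blockIndex_le (m : ℕ) : cum (blockIndex m) ≤ m := by
  have hmin := Nat.find_min (show ∃ k, m + 1 ≤ cum k from ⟨m + 1, le_cum (m + 1)⟩)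
    (m := blockIndex m) (by rw [find_le_cum_eq]; exact Nat.lt_succ_self _)
  omega

lemma cum_blockIndex_add_blockPos (m : ℕ) : cum (blockIndex m) + blockPos m = m :=
  Nat.add_sub_cancel' (cum_blockIndex_le m)

lemma blockPos_lt (m : ℕ) : blockPos m < Nn (blockIndex m + 1) := by
  have hfind := Nat.find_spec (show ∃ k, m + 1 ≤ cum k from ⟨m + 1, le_cum (m + 1)⟩)
  rw [find_le_cum_eq, cum] at hfind
  have := cum_blockIndex_add_blockPos m
  omega

lemma psi_eq_psiBlock (m : ℕ) : psi m = psiBlock (blockIndex m + 1) (blockPos m + 1) := by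
  have := cum_blockIndex_le m
  rw [psi, find_le_cum_eq, Nat.add_sub_cancel, Nat.sub_add_comm this, blockPos]

lemma eq_of_blockIndex_eq_of_blockPos_eq {m m' : ℕ} (hindex : blockIndex m = blockIndex m')
    (hpos : blockPos m = blockPos m') : m = m' := by
  rw [← cum_blockIndex_add_blockPos m, hindex, hpos, cum_blockIndex_add_blockPos]

lemma card_filter_blockIndex_le (A : Finset ℕ) (q : ℕ) :
    (A.filter fun m => q = blockIndex m).card ≤ Nn (q + 1) := by
  rw [← Finset.card_range (Nn (q + 1))]
  refine Finset.card_le_card_of_injOn blockPos (fun m hm => ?_) fun m hm m' hm' => ?_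
  · obtain ⟨-, rfl⟩ := Finset.mem_filter.1 hm
    exact Finset.mem_coe.2 (Finset.mem_range.2 (blockPos_lt m))
  · exact eq_of_blockIndex_eq_of_blockPos_eq
      ((Finset.mem_filter.1 hm).2.symm.trans (Finset.mem_filter.1 hm').2)

end Blocks

section WalshExpansion

open Finset

/-- The Walsh number of an index: `Sum.inl q` stands for the `q`-th non-Rademacher Walsh function
(counted from `0`), and `Sum.inr l` for the Rademacher function `r_{l+1} = W_{2^l}`. -/
noncomputable def psiFreq : ℕ ⊕ ℕ → ℕ :=
  Sum.elim (Nat.nth fun n => ¬ ∃ m : ℕ, n = 2 ^ m) (2 ^ ·)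

/-- The index, as in `psiFreq`, of the Walsh function multiplied by column `j + 1` of the
Olevskiĭ matrix in block `q + 1` of the system `B`. -/
def psiColumn (q : ℕ) : ℕ → ℕ ⊕ ℕ
  | 0 => Sum.inl q
  | j + 1 => Sum.inr (Fn q + j)

/-- The Walsh coefficients of `psi m`, indexed as in `psiFreq`. -/
noncomputable def psiCoeff (m : ℕ) : ℕ ⊕ ℕ → ℝ
  | Sum.inl q => if q = blockIndex m then 1 / √(Nn (q + 1)) else 0
  | Sum.inr l =>
    if l ∈ Ico (Fn (blockIndex m)) (Fn (blockIndex m + 1)) then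
      olevskii (10 ^ (blockIndex m + 1)) (blockPos m + 1) (l - Fn (blockIndex m) + 2)
    else 0

/-- The indices of the Walsh functions that occur in the first `K` blocks of the system `B`. -/
def psiSupport (K : ℕ) : Finset (ℕ ⊕ ℕ) := (range K).disjSum (range (Fn K))

lemma infinite_setOf_not_exists_eq_two_pow : {n : ℕ | ¬ ∃ m : ℕ, n = 2 ^ m}.Infinite := by
  refine Set.infinite_of_injective_forall_mem (f := fun n : ℕ => 2 * n + 3)
    (fun a b h => by simpa using h) ?_
  rintro n ⟨_ | m, hm⟩
  · simp at hm
  · rw [pow_succ] at hm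
    omega

lemma psiFreq_injective : Function.Injective psiFreq :=
  (Nat.nth_injective infinite_setOf_not_exists_eq_two_pow).sumElim
    (Nat.pow_right_injective le_rfl) fun q l h =>
      Nat.nth_mem_of_infinite infinite_setOf_not_exists_eq_two_pow q ⟨l, h⟩

lemma psiCoeff_psiColumn {m q j : ℕ} (hj : j < Nn (q + 1)) :
    psiCoeff m (psiColumn q j) =
      if q = blockIndex m then olevskii (10 ^ (q + 1)) (blockPos m + 1) (j + 1) else 0 := by
  have hFn := Fn_succ q
  rcases j with _ | j
  · simp only [psiColumn, psiCoeff, zero_add, olevskii_ten_pow_one]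
  · rcases lt_trichotomy q (blockIndex m) with h | rfl | h
    · have hle : Fn (q + 1) ≤ Fn (blockIndex m) := monotone_Fn h
      simp only [psiColumn, psiCoeff, mem_Ico]
      rw [if_neg (by omega), if_neg h.ne]
    · simp only [psiColumn, psiCoeff, mem_Ico, if_true]
      rw [if_pos (by omega), Nat.add_sub_cancel_left]
    · have hle : Fn (blockIndex m + 1) ≤ Fn q := monotone_Fn h
      simp only [psiColumn, psiCoeff, mem_Ico]
      rw [if_neg (by omega), if_neg h.ne']

lemma sum_psiSupport_psiCoeff_mul {K m : ℕ} (hm : blockIndex m < K) (g : ℕ ⊕ ℕ → ℝ) :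
    ∑ x ∈ psiSupport K, psiCoeff m x * g x =
      ∑ j ∈ range (Nn (blockIndex m + 1)),
        olevskii (10 ^ (blockIndex m + 1)) (blockPos m + 1) (j + 1) *
          g (psiColumn (blockIndex m) j) := by
  have hsub : Ico (Fn (blockIndex m)) (Fn (blockIndex m + 1)) ⊆ range (Fn K) := fun l hl =>
    mem_range.2 ((mem_Ico.1 hl).2.trans_le (monotone_Fn hm))
  have hFn : Fn (blockIndex m + 1) - Fn (blockIndex m) = Nn (blockIndex m + 1) - 1 := by
    rw [Fn_succ, Nat.add_sub_cancel_left]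
  rw [psiSupport, sum_disjSum, ← Nat.sub_add_cancel (Nn_pos (blockIndex m + 1)),
    sum_range_succ', add_comm]
  simp only [psiCoeff, psiColumn, ite_mul, zero_mul, sum_ite_eq', sum_ite_mem,
    inter_eq_right.2 hsub, mem_range, hm, if_true, sum_Ico_eq_sum_range, hFn,
    Nat.add_sub_cancel_left, olevskii_ten_pow_one, zero_add]

lemma sum_psiSupport_psiCoeff_mul_psiCoeff {K m : ℕ} (hm : blockIndex m < K) (m' : ℕ) :
    ∑ x ∈ psiSupport K, psiCoeff m x * psiCoeff m' x = if m = m' then 1 else 0 := by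
  rw [sum_psiSupport_psiCoeff_mul hm,
    sum_congr rfl fun j hj => by rw [psiCoeff_psiColumn (mem_range.1 hj)]]
  by_cases hindex : blockIndex m = blockIndex m'
  · have hpos : blockPos m = blockPos m' ↔ m = m' :=
      ⟨eq_of_blockIndex_eq_of_blockPos_eq hindex, congrArg blockPos⟩
    simp only [if_pos hindex]
    rw [← if_congr hpos rfl rfl]
    exact sum_olevskii_mul_olevskii (blockPos_lt m) (hindex ▸ blockPos_lt m')
  · simp only [if_neg hindex, mul_zero, sum_const_zero, if_neg (mt (congrArg blockIndex) hindex)]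

theorem psi_eq_sum_walsh {K m : ℕ} (hm : blockIndex m < K) (t : ℝ) :
    psi m t = ∑ x ∈ psiSupport K, psiCoeff m x * walsh (psiFreq x) t := by
  have hshift (j : ℕ) : Fn (blockIndex m) + (2 + j) - 1 = Fn (blockIndex m) + j + 1 := by omega
  rw [sum_psiSupport_psiCoeff_mul hm, psi_eq_psiBlock, psiBlock,
    ← Nat.sub_add_cancel (Nn_pos (blockIndex m + 1)), sum_range_succ',
    Nat.sub_add_cancel (Nn_pos (blockIndex m + 1)), add_comm, zero_add, olevskii_ten_pow_one,
    one_div_mul_eq_div]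
  congr 1
  rw [← Ico_add_one_right_eq_Icc, sum_Ico_eq_sum_range]
  refine sum_congr (by congr 1) fun j _ => ?_
  rw [Nat.add_sub_cancel, hshift, ← walsh_two_pow, Nat.add_comm 2 j]
  rfl

end WalshExpansion

section Democracy

open Finset ProbabilityTheory

/-- The Walsh coefficients of `∑ m ∈ A, psi m`, indexed as in `psiFreq`. -/
noncomputable def psiSumCoeff (A : Finset ℕ) (x : ℕ ⊕ ℕ) : ℝ := ∑ m ∈ A, psiCoeff m x

variable {A : Finset ℕ} {K : ℕ}

lemma sum_psi_eq_sum_walsh (hK : ∀ m ∈ A, blockIndex m < K) (t : ℝ) :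
    ∑ m ∈ A, psi m t = ∑ x ∈ psiSupport K, psiSumCoeff A x * walsh (psiFreq x) t := by
  rw [sum_congr rfl fun m hm => psi_eq_sum_walsh (hK m hm) t, sum_comm]
  simp only [psiSumCoeff, sum_mul]

lemma sum_psiSupport_psiSumCoeff_sq (hK : ∀ m ∈ A, blockIndex m < K) :
    ∑ x ∈ psiSupport K, psiSumCoeff A x ^ 2 = #A := by
  calc ∑ x ∈ psiSupport K, psiSumCoeff A x ^ 2
      = ∑ m ∈ A, ∑ m' ∈ A, ∑ x ∈ psiSupport K, psiCoeff m x * psiCoeff m' x := by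
        simp only [psiSumCoeff, sq, sum_mul_sum]
        rw [sum_comm]
        exact sum_congr rfl fun m _ => sum_comm
    _ = ∑ m ∈ A, ∑ m' ∈ A, if m = m' then 1 else 0 :=
        sum_congr rfl fun m hm => sum_congr rfl fun m' _ =>
          sum_psiSupport_psiCoeff_mul_psiCoeff (hK m hm) m'
    _ = #A := by
        simp only [sum_ite_eq]
        rw [sum_congr rfl fun m hm => if_pos hm, sum_const, nsmul_eq_mul, mul_one]

lemma exists_forall_blockIndex_lt (A : Finset ℕ) : ∃ K, ∀ m ∈ A, blockIndex m < K :=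
  ⟨A.sup blockIndex + 1, fun _ hm => Nat.lt_succ_of_le (le_sup hm)⟩

lemma measurable_sum_psi (A : Finset ℕ) : Measurable fun t => ∑ m ∈ A, psi m t := by
  obtain ⟨K, hK⟩ := exists_forall_blockIndex_lt A
  simp only [sum_psi_eq_sum_walsh hK]
  exact Finset.measurable_fun_sum _ fun _ _ => (measurable_walsh _).const_mul _

theorem integral_sq_sum_psi (A : Finset ℕ) :
    ∫ t, (∑ m ∈ A, psi m t) ^ 2 ∂lebesgue01 = #A := by
  obtain ⟨K, hK⟩ := exists_forall_blockIndex_lt A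
  simp only [sum_psi_eq_sum_walsh hK]
  rw [integral_sq_sum_mul_walsh psiFreq_injective.injOn, sum_psiSupport_psiSumCoeff_sq hK]

lemma psiSumCoeff_inl (A : Finset ℕ) (q : ℕ) :
    psiSumCoeff A (Sum.inl q) = #(A.filter fun m => q = blockIndex m) / √(Nn (q + 1)) := by
  simp only [psiSumCoeff, psiCoeff]
  rw [← sum_filter, sum_const, nsmul_eq_mul, mul_one_div]

/-- The part of the Walsh expansion of `∑ m ∈ A, psi m` carried by the first `K` non-Rademacher
Walsh functions. -/
noncomputable def psiSumWalshPart (A : Finset ℕ) (K : ℕ) (t : ℝ) : ℝ :=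
  ∑ q ∈ range K, psiSumCoeff A (Sum.inl q) * walsh (psiFreq (Sum.inl q)) t

/-- The part of the Walsh expansion of `∑ m ∈ A, psi m` carried by the first `Fn K` Rademacher
functions. -/
noncomputable def psiSumRademacherPart (A : Finset ℕ) (K : ℕ) (t : ℝ) : ℝ :=
  ∑ l ∈ range (Fn K), psiSumCoeff A (Sum.inr l) * rademacher (l + 1) t

lemma sum_psi_eq_walshPart_add_rademacherPart (hK : ∀ m ∈ A, blockIndex m < K) (t : ℝ) :
    ∑ m ∈ A, psi m t = psiSumWalshPart A K t + psiSumRademacherPart A K t := by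
  rw [sum_psi_eq_sum_walsh hK, psiSupport, sum_disjSum]
  simp only [← walsh_two_pow, psiSumWalshPart, psiSumRademacherPart]
  rfl

lemma measurable_psiSumWalshPart (A : Finset ℕ) (K : ℕ) : Measurable (psiSumWalshPart A K) :=
  Finset.measurable_fun_sum _ fun _ _ => (measurable_walsh _).const_mul _

-- With `n ≤ min |A| N` elements in block `q + 1`, the coefficient `n / √N` is at most both `√N`
-- and `|A| / √N`, and `√N` grows geometrically in `q`.
lemma abs_psiSumWalshPart_le (A : Finset ℕ) (K : ℕ) (t : ℝ) :
    |psiSumWalshPart A K t| ≤ 4 * √(#A) := by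
  have hN (q : ℕ) : (0 : ℝ) < Nn (q + 1) := Nat.cast_pos.2 (Nn_pos _)
  have hcoeff_nonneg (q : ℕ) : 0 ≤ psiSumCoeff A (Sum.inl q) := by
    rw [psiSumCoeff_inl]; positivity
  calc |psiSumWalshPart A K t|
      ≤ ∑ q ∈ range K, |psiSumCoeff A (Sum.inl q) * walsh (psiFreq (Sum.inl q)) t| :=
        abs_sum_le_sum_abs _ _
    _ ≤ ∑ q ∈ range K, psiSumCoeff A (Sum.inl q) := by
        refine sum_le_sum fun q _ => ?_
        rw [abs_mul, abs_of_nonneg (hcoeff_nonneg q)]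
        exact mul_le_of_le_one_right (hcoeff_nonneg q) (abs_walsh_le_one _ _)
    _ ≤ 4 * √(#A) := by
        refine sum_range_le_four_mul_of_lacunary (fun q => Real.sqrt_pos.2 (hN q)) (fun q => ?_)
          (fun q => ?_) (fun q => ?_) (Real.sqrt_nonneg _) K
        · have hN4 : (4 : ℝ) * Nn (q + 1) ≤ Nn (q + 1 + 1) := mod_cast four_mul_Nn_le (q + 1)
          refine Real.le_sqrt_of_sq_le ?_
          rw [mul_pow, Real.sq_sqrt (hN q).le]
          linarith
        · rw [psiSumCoeff_inl, div_le_iff₀ (Real.sqrt_pos.2 (hN q)), Real.mul_self_sqrt (hN q).le]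
          exact_mod_cast card_filter_blockIndex_le A q
        · rw [psiSumCoeff_inl, Real.sq_sqrt (Nat.cast_nonneg _)]
          gcongr
          exact filter_subset _ _

lemma hasSubgaussianMGF_psiSumRademacherPart (hK : ∀ m ∈ A, blockIndex m < K) :
    HasSubgaussianMGF (psiSumRademacherPart A K) #A lebesgue01 := by
  refine hasSubgaussianMGF_of_le (hasSubgaussianMGF_sum_mul_rademacher (range (Fn K))
    fun l => psiSumCoeff A (Sum.inr l)) ?_
  rw [← NNReal.coe_le_coe]
  push_cast
  simp only [Real.norm_eq_abs, sq_abs]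
  rw [← sum_psiSupport_psiSumCoeff_sq hK, psiSupport, sum_disjSum]
  exact le_add_of_nonneg_left (sum_nonneg fun q _ => sq_nonneg _)

theorem integrable_exp_abs_sum_psi_div (A : Finset ℕ) :
    Integrable (fun t => Real.exp (|∑ m ∈ A, psi m t| / √(#A))) lebesgue01 := by
  obtain ⟨K, hK⟩ := exists_forall_blockIndex_lt A
  simp only [sum_psi_eq_walshPart_add_rademacherPart hK, div_eq_inv_mul]
  exact integrable_exp_mul_abs_add (hasSubgaussianMGF_psiSumRademacherPart hK)
    (measurable_psiSumWalshPart A K).aemeasurable (abs_psiSumWalshPart_le A K) (by positivity)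

theorem integral_exp_abs_sum_psi_div_le (hA : A.Nonempty) :
    ∫ t, Real.exp (|∑ m ∈ A, psi m t| / √(#A)) ∂lebesgue01 ≤
      Real.exp 4 * (2 * Real.exp (1 / 2)) := by
  obtain ⟨K, hK⟩ := exists_forall_blockIndex_lt A
  have hcard : (0 : ℝ) < #A := Nat.cast_pos.2 hA.card_pos
  have hbound := integral_exp_mul_abs_add_le (hasSubgaussianMGF_psiSumRademacherPart hK)
    (abs_psiSumWalshPart_le A K) (t := (√(#A))⁻¹) (by positivity)
  have hwalsh : (√(#A : ℝ))⁻¹ * (4 * √(#A)) = 4 := by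
    field_simp [(Real.sqrt_pos.2 hcard).ne']
  have hrademacher : (#A : ℝ) * (√(#A))⁻¹ ^ 2 = 1 := by
    rw [inv_pow, Real.sq_sqrt hcard.le, mul_inv_cancel₀ hcard.ne']
  simp only [sum_psi_eq_walshPart_add_rademacherPart hK, div_eq_inv_mul (|_| : ℝ)]
  rwa [hwalsh, NNReal.coe_natCast, hrademacher] at hbound

end Democracy

theorem stmt_1_general (p : ℝ) (hp : 0 < p) :
    ∃ c C : ℝ, 0 < c ∧ 0 < C ∧ ∀ A : Finset ℕ,
      c * (A.card : ℝ) ^ ((1:ℝ)/2) ≤ LpNorm p (fun t => ∑ m ∈ A, psi m t) ∧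
      LpNorm p (fun t => ∑ m ∈ A, psi m t) ≤ C * (A.card : ℝ) ^ ((1:ℝ)/2) := by
  let M : ℝ := Real.exp 4 * (2 * Real.exp (1 / 2))
  have hM : 0 < M := by positivity
  refine ⟨(((p + 2) / p) ^ ((p + 2) / p) * M)⁻¹, p * M ^ (1 / p), by positivity, by positivity,
    fun A => ?_⟩
  rw [← Real.sqrt_eq_rpow]
  rcases A.eq_empty_or_nonempty with rfl | hA
  · simp [LpNorm, Real.zero_rpow, hp.ne']
  · have hσ : 0 < √(A.card : ℝ) := Real.sqrt_pos.2 (Nat.cast_pos.2 hA.card_pos)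
    have hsq : ∫ t, (∑ m ∈ A, psi m t) ^ 2 ∂lebesgue01 = √(A.card : ℝ) ^ 2 := by
      rw [integral_sq_sum_psi, Real.sq_sqrt (Nat.cast_nonneg _)]
    have hexp := integrable_exp_abs_sum_psi_div A
    have hle := integral_exp_abs_sum_psi_div_le hA
    exact ⟨le_rpow_integral_abs_rpow_of_exp_abs_div hp hσ (measurable_sum_psi A).aemeasurable
      hsq hexp hM hle,
      rpow_integral_abs_rpow_le_of_exp_abs_div hp hσ hexp hle⟩

/-- The system `B = {ψ_m}` is democratic in `L_p([0,1])`, `1 < p < ∞`, with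
`‖∑_{m∈A} ψ_m‖_p ≍ |A|^{1/2}`. -/
theorem stmt_1 (p : ℝ) (hp : 1 < p) :
    ∃ c C : ℝ, 0 < c ∧ 0 < C ∧ ∀ A : Finset ℕ,
      c * (A.card : ℝ) ^ ((1:ℝ)/2) ≤ LpNorm p (fun t => ∑ m ∈ A, psi m t) ∧
      LpNorm p (fun t => ∑ m ∈ A, psi m t) ≤ C * (A.card : ℝ) ^ ((1:ℝ)/2) :=
  stmt_1_general p (zero_lt_one.trans hp)
end

section
/- There exists a finite constant C such that for all k ≥ 1 and all rows i ∈ {1,…,2^k}, the ℓ_1-norm of the i-th row of the Olevskiĭ matrix satisfies Σ_{j=1}^{2^k} |a_{ij}^{(k)}| ≤ C. -/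
open MeasureTheory Filter

/-!
Column `2 ^ s + ν` is the `ν`-th Haar vector of level `s`: it has constant modulus on the `ν`-th of
the `2 ^ s` consecutive blocks of length `2 ^ (k - s)` and vanishes elsewhere. Each row meets
exactly one block per level, so its `ℓ¹`-norm is a geometric sum with ratio `1 / √2`.
-/

section General

theorem sum_Icc_one_two_pow {M : Type*} [AddCommMonoid M] (f : ℕ → M) (k : ℕ) :
    ∑ j ∈ Finset.Icc 1 (2 ^ k), f j =
      f 1 + ∑ s ∈ Finset.range k, ∑ ν ∈ Finset.Icc 1 (2 ^ s), f (2 ^ s + ν) := by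
  simp only [← Finset.Ico_add_one_right_eq_Icc]
  induction k with
  | zero => simp
  | succ k ih =>
    have hshift : ∑ ν ∈ Finset.Ico 1 (2 ^ k + 1), f (2 ^ k + ν) =
        ∑ j ∈ Finset.Ico (2 ^ k + 1) (2 ^ (k + 1) + 1), f j := by
      rw [Finset.sum_Ico_add]
      congr 2 <;> ring
    have hle : 2 ^ k ≤ 2 ^ (k + 1) := Nat.pow_le_pow_right two_pos k.le_succ
    rw [Finset.sum_range_succ, ← add_assoc, ← ih, hshift,
      Finset.sum_Ico_consecutive _ (by omega) (by omega)]

theorem sum_range_pow_sub_mul_one_sub {R : Type*} [Ring R] (x : R) (k : ℕ) :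
    (∑ s ∈ Finset.range k, x ^ (k - s)) * (1 - x) = x - x ^ (k + 1) := by
  induction k with
  | zero => simp
  | succ k ih =>
    simp only [Finset.sum_range_succ', Nat.add_sub_add_right, Nat.sub_zero]
    rw [add_mul, ih, mul_sub, mul_one, ← pow_succ, sub_add_sub_cancel]

theorem sum_range_inv_sqrt_two_pow_sub (k : ℕ) :
    ∑ s ∈ Finset.range k, (√2)⁻¹ ^ (k - s) = (1 + √2) * (1 - (√2)⁻¹ ^ k) := by
  have hratio : (1 - (√2)⁻¹) * (2 + √2) = 1 := by
    field_simp
    linear_combination Real.sq_sqrt (zero_le_two (α := ℝ))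
  have hinv : (√2)⁻¹ * (2 + √2) = 1 + √2 := by
    field_simp
    linear_combination -Real.sq_sqrt (zero_le_two (α := ℝ))
  calc ∑ s ∈ Finset.range k, (√2)⁻¹ ^ (k - s)
      = (∑ s ∈ Finset.range k, (√2)⁻¹ ^ (k - s)) * (1 - (√2)⁻¹) * (2 + √2) := by
        rw [mul_assoc, hratio, mul_one]
    _ = ((√2)⁻¹ - (√2)⁻¹ ^ (k + 1)) * (2 + √2) := by rw [sum_range_pow_sub_mul_one_sub]
    _ = (√2)⁻¹ * (2 + √2) * (1 - (√2)⁻¹ ^ k) := by ring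
    _ = (1 + √2) * (1 - (√2)⁻¹ ^ k) := by rw [hinv]

theorem two_rpow_neg_natCast_div_two (n : ℕ) : (2 : ℝ) ^ (-(n : ℝ) / 2) = (√2)⁻¹ ^ n := by
  rw [Real.sqrt_eq_rpow, ← Real.rpow_neg zero_le_two, ← Real.rpow_mul_natCast zero_le_two]
  congr 1
  ring

theorem ceilDiv_eq_iff_sub_one_mul_lt_and_le {i L ν : ℕ} (hL : 0 < L) (hν : 0 < ν) :
    i ⌈/⌉ L = ν ↔ (ν - 1) * L < i ∧ i ≤ ν * L := by
  have hle (m : ℕ) : i ⌈/⌉ L ≤ m ↔ i ≤ m * L := by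
    rw [ceilDiv_le_iff_le_mul hL, mul_comm]
  rw [← hle, ← not_le, ← hle]
  omega

end General

section Olevskii

variable {k s ν i : ℕ}

theorem abs_olevskii_one (k i : ℕ) : |olevskii k i 1| = (√2)⁻¹ ^ k := by
  rw [olevskii, if_pos rfl, two_rpow_neg_natCast_div_two, abs_of_nonneg (by positivity)]

theorem olevskii_two_pow_add (hν : ν ∈ Finset.Icc 1 (2 ^ s)) (hs : s < k) :
    olevskii k i (2 ^ s + ν) =
      if (ν - 1) * 2 ^ (k - s) < i ∧ i ≤ (2 * ν - 1) * 2 ^ (k - s - 1) then (√2)⁻¹ ^ (k - s)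
      else if (2 * ν - 1) * 2 ^ (k - s - 1) < i ∧ i ≤ ν * 2 ^ (k - s) then -(√2)⁻¹ ^ (k - s)
      else 0 := by
  obtain ⟨hν_pos, hν_le⟩ := Finset.mem_Icc.mp hν
  have hpow : 0 < 2 ^ s := Nat.two_pow_pos s
  have hlog : Nat.log 2 (2 ^ s + ν - 1) = s :=
    Nat.log_eq_of_pow_le_of_lt_pow (by omega) (by omega)
  have hweight : (2 : ℝ) ^ (((s : ℝ) - k) / 2) = (√2)⁻¹ ^ (k - s) := by
    rw [← two_rpow_neg_natCast_div_two, Nat.cast_sub hs.le, neg_sub]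
  simp only [olevskii, if_neg (show 2 ^ s + ν ≠ 1 by omega), hlog, Nat.add_sub_cancel_left,
    hweight]

theorem abs_olevskii_two_pow_add (hν : ν ∈ Finset.Icc 1 (2 ^ s)) (hs : s < k) :
    |olevskii k i (2 ^ s + ν)| = if i ⌈/⌉ 2 ^ (k - s) = ν then (√2)⁻¹ ^ (k - s) else 0 := by
  have hν_pos : 0 < ν := (Finset.mem_Icc.mp hν).1
  have hhalf : 2 ^ (k - s) = 2 * 2 ^ (k - s - 1) := by
    rw [← pow_succ', Nat.sub_add_cancel (Nat.sub_pos_of_lt hs)]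
  have hleft : (ν - 1) * 2 ^ (k - s) ≤ (2 * ν - 1) * 2 ^ (k - s - 1) := by
    rw [hhalf, ← mul_assoc]
    exact Nat.mul_le_mul_right _ (by omega)
  have hright : (2 * ν - 1) * 2 ^ (k - s - 1) ≤ ν * 2 ^ (k - s) := by
    rw [hhalf, ← mul_assoc]
    exact Nat.mul_le_mul_right _ (by omega)
  have hweight : |(√2)⁻¹ ^ (k - s)| = (√2)⁻¹ ^ (k - s) := abs_of_nonneg (by positivity)
  simp only [olevskii_two_pow_add hν hs, ceilDiv_eq_iff_sub_one_mul_lt_and_le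
    (Nat.two_pow_pos (k - s)) hν_pos, apply_ite abs, abs_neg, abs_zero, hweight]
  split_ifs <;> first | rfl | omega

theorem sum_abs_olevskii_two_pow_add (hi : i ∈ Finset.Icc 1 (2 ^ k)) (hs : s < k) :
    ∑ ν ∈ Finset.Icc 1 (2 ^ s), |olevskii k i (2 ^ s + ν)| = (√2)⁻¹ ^ (k - s) := by
  obtain ⟨hi_pos, hi_le⟩ := Finset.mem_Icc.mp hi
  have hL : 0 < 2 ^ (k - s) := Nat.two_pow_pos _
  have hblock : i ⌈/⌉ 2 ^ (k - s) ∈ Finset.Icc 1 (2 ^ s) := by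
    rw [Finset.mem_Icc, Nat.one_le_iff_ne_zero, ← Nat.pos_iff_ne_zero, ← not_le,
      ceilDiv_le_iff_le_mul hL, ceilDiv_le_iff_le_mul hL, ← pow_add, Nat.sub_add_cancel hs.le]
    omega
  rw [Finset.sum_congr rfl fun ν hν => abs_olevskii_two_pow_add hν hs, Finset.sum_ite_eq,
    if_pos hblock]

theorem sum_abs_olevskii (hi : i ∈ Finset.Icc 1 (2 ^ k)) :
    ∑ j ∈ Finset.Icc 1 (2 ^ k), |olevskii k i j| = 1 + √2 - √2 * (√2)⁻¹ ^ k := by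
  have hlevels : ∑ s ∈ Finset.range k, ∑ ν ∈ Finset.Icc 1 (2 ^ s), |olevskii k i (2 ^ s + ν)| =
      ∑ s ∈ Finset.range k, (√2)⁻¹ ^ (k - s) :=
    Finset.sum_congr rfl fun s hs => sum_abs_olevskii_two_pow_add hi (Finset.mem_range.mp hs)
  rw [sum_Icc_one_two_pow, abs_olevskii_one, hlevels, sum_range_inv_sqrt_two_pow_sub]
  ring

end Olevskii

/-- Uniform row `ℓ_1`-bound for the Olevskiĭ matrices:
`∑_{j=1}^{2^k} |a_{ij}^{(k)}| ≤ C` for all `k ≥ 1` and all rows `i`. -/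
theorem stmt_5 :
    ∃ C : ℝ, ∀ k : ℕ, 1 ≤ k → ∀ i ∈ Finset.Icc 1 (2 ^ k),
      ∑ j ∈ Finset.Icc 1 (2 ^ k), |olevskii k i j| ≤ C := by
  refine ⟨1 + √2, fun k _ i hi => ?_⟩
  rw [sum_abs_olevskii hi]
  exact sub_le_self _ (by positivity)
end
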